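/- Let κ ≥ 2 be real, let η be real with 0 < η ≤ 1/(20κ²), set z = ⌈ln(1/η)⌉ and L = ⌊log₂ κ⌋, and define λ_{i,j} = 2^{−i}·(1 + j/z) for i = 1, …, L and j = 1, …, z. Then for every r ∈ [1/κ, 1 + η], ∑_{i=1}^{L} 2^{i/5} · ∑_{j=1}^{z} ∫_{λ_{i,j} − η}^{λ_{i,j} + η} ln|1 − x/r| dx ≥ −377·η·z. -/

import Mathlib

/-!
Choose `k` with `2 ^ (-k) ≤ r ≤ 2 ^ (1 - k)` and measure each level sum in units of `2 η z`.

* Levels `i ≤ k - 2` have `x / r ≥ 2 ^ (k - 1 - i)`, so they contribute at least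
  `(k - 2 - i) log 2 ≥ 0` (`coarse_level`).
* Levels `i ≥ k + 2` have `x / r` of size `2 ^ (k - i)`, so they cost `O(2 ^ (k - i))`
  (`fine_level`).
* The three levels in between cost a constant (`near_level`). On each side of `r` the nearest node
  costs about `log (1/η) ≤ z` in total, as the integral of `log |1 - x / r|` over an interval of
  length `2 η` is smallest when the interval is centred at `r` (`integral_singular`). The other
  nodes stay at distance `≳ n / (z 2 ^ i)`, as `η` is at most a quarter of the node spacing
  (`separation`), and `z! ≥ (z / e) ^ z` bounds their total (`half_sum`).

After weighting by `w ^ i`, `w = 2 ^ (1/5)`, the negative part is at most `23.2 w ^ k`. The positive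
part is `log 2 * ∑ i, w ^ i (k - 2 - i)`, which the closed form `sum_mul_pow_closed` bounds below by
more than `27 w ^ k - O(k)`. Their difference stays above `-188.5 = -377 / 2` because `w ^ k`
dominates the linear term (`sum_levelBound`).
-/

open Matrix Polynomial Set

/-- Euclidean norm of a vector in `ℝⁿ`. -/
noncomputable def vecNorm {n : ℕ} (v : Fin n → ℝ) : ℝ :=
  Real.sqrt (∑ i, v i ^ 2)

/-- Spectral (operator) norm of a real matrix. -/
noncomputable def matNorm {m n : ℕ} (A : Matrix (Fin m) (Fin n) ℝ) : ℝ :=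
  sSup {c : ℝ | ∃ v : Fin n → ℝ, vecNorm v ≤ 1 ∧ c = vecNorm (A.mulVec v)}

/-- Largest eigenvalue of a square real matrix. -/
noncomputable def lmax {n : ℕ} (A : Matrix (Fin n) (Fin n) ℝ) : ℝ :=
  sSup {μ : ℝ | ∃ v : Fin n → ℝ, v ≠ 0 ∧ A.mulVec v = μ • v}

/-- Smallest eigenvalue of a square real matrix. -/
noncomputable def lmin {n : ℕ} (A : Matrix (Fin n) (Fin n) ℝ) : ℝ :=
  sInf {μ : ℝ | ∃ v : Fin n → ℝ, v ≠ 0 ∧ A.mulVec v = μ • v}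

/-- A matrix is tridiagonal if `T i j = 0` whenever `|i - j| > 1`. -/
def IsTridiagonal {k : ℕ} (T : Matrix (Fin k) (Fin k) ℝ) : Prop :=
  ∀ i j : Fin k, 1 < |(i : ℤ) - (j : ℤ)| → T i j = 0

/-- The matrix function `f(A)` of a real symmetric matrix, defined through the
eigendecomposition `A = V Λ Vᵀ` as `V f(Λ) Vᵀ`. -/
noncomputable def matFun {n : ℕ} {A : Matrix (Fin n) (Fin n) ℝ} (hA : A.IsHermitian)
    (f : ℝ → ℝ) : Matrix (Fin n) (Fin n) ℝ :=
  (hA.eigenvectorUnitary : Matrix (Fin n) (Fin n) ℝ) * Matrix.diagonal (f ∘ hA.eigenvalues) *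
    star (hA.eigenvectorUnitary : Matrix (Fin n) (Fin n) ℝ)

/-- The `i`-th Chebyshev polynomial of the first kind, shifted and stretched to the range
`[lmin A - η, lmax A + η]`: with `r_max = lmax A + η`, `r_min = lmin A - η` and
`δ = 2 / (r_max - r_min)`, this is `y ↦ T_i (δ (y - r_min) - 1)`. -/
noncomputable def shiftedCheb {n : ℕ} (A : Matrix (Fin n) (Fin n) ℝ) (η : ℝ) (i : ℕ) :
    Polynomial ℝ :=
  (Polynomial.Chebyshev.T ℝ i).comp
    (Polynomial.C (2 / ((lmax A + η) - (lmin A - η))) *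
      (Polynomial.X - Polynomial.C (lmin A - η)) - 1)

/-! ### A single integral -/

/-- The integral of `log |y|` over `[a - δ, a + δ]`, up to the summand `-2δ`, is smallest at
`a = 0`. For `a ≤ δ` this is midpoint convexity of `x log x`; for `a > δ` it is monotonicity of
`log`. -/
lemma mul_log_add_sub_mul_log_sub_ge_of_nonneg (a δ : ℝ) (hδ : 0 < δ) (ha : 0 ≤ a) :
    2 * δ * Real.log δ ≤ (a + δ) * Real.log (a + δ) - (a - δ) * Real.log (a - δ) := by
  rcases le_or_gt a δ with h | h
  · have hc := Real.convexOn_mul_log.2 (show a + δ ∈ Set.Ici (0 : ℝ) by simp; linarith)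
      (show δ - a ∈ Set.Ici (0 : ℝ) by simp; linarith)
      (show (0 : ℝ) ≤ 1 / 2 by norm_num) (show (0 : ℝ) ≤ 1 / 2 by norm_num) (by norm_num)
    simp only [smul_eq_mul] at hc
    have e : 1 / 2 * (a + δ) + 1 / 2 * (δ - a) = δ := by ring
    rw [e] at hc
    have e2 : Real.log (a - δ) = Real.log (δ - a) := by rw [← Real.log_neg_eq_log]; congr 1; ring
    rw [e2]; linarith
  · have h1 : Real.log (a - δ) ≤ Real.log (a + δ) := Real.log_le_log (by linarith) (by linarith)
    have h2 : Real.log δ ≤ Real.log (a + δ) := Real.log_le_log (by linarith) (by linarith)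
    nlinarith

lemma mul_log_add_sub_mul_log_sub_ge (a δ : ℝ) (hδ : 0 < δ) :
    2 * δ * Real.log δ ≤ (a + δ) * Real.log (a + δ) - (a - δ) * Real.log (a - δ) := by
  rcases le_total 0 a with h | h
  · exact mul_log_add_sub_mul_log_sub_ge_of_nonneg a δ hδ h
  · have := mul_log_add_sub_mul_log_sub_ge_of_nonneg (-a) δ hδ (by linarith)
    have e1 : Real.log (-a + δ) = Real.log (a - δ) := by rw [← Real.log_neg_eq_log]; congr 1; ring
    have e2 : Real.log (-a - δ) = Real.log (a + δ) := by rw [← Real.log_neg_eq_log]; congr 1; ring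
    rw [e1, e2] at this; linarith

/-- Bound valid for every centre `c`, including `c = r`, where it is attained. -/
lemma integral_singular (c η r : ℝ) (hη : 0 < η) (hr : 0 < r) :
    2 * η * (Real.log (η / r) - 1) ≤ ∫ x in (c - η)..(c + η), Real.log |1 - x / r| := by
  simp only [Real.log_abs]
  rw [intervalIntegral.integral_comp_sub_div (fun y => Real.log y) hr.ne', integral_log]
  have h := mul_log_add_sub_mul_log_sub_ge (1 - c / r) (η / r) (by positivity)
  have e1 : 1 - (c - η) / r = 1 - c / r + η / r := by ring
  have e2 : 1 - (c + η) / r = 1 - c / r - η / r := by ring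
  rw [e1, e2, smul_eq_mul]
  calc 2 * η * (Real.log (η / r) - 1)
      = r * (2 * (η / r) * Real.log (η / r) - 2 * (η / r)) := by field_simp
    _ ≤ _ := by gcongr; linarith

lemma integral_regular (c η r a : ℝ) (hη : 0 < η) (ha : 0 < a)
    (h : ∀ x, c - η ≤ x → x ≤ c + η → a ≤ |1 - x / r|) :
    2 * η * Real.log a ≤ ∫ x in (c - η)..(c + η), Real.log |1 - x / r| := by
  have hint : IntervalIntegrable (fun x => Real.log |1 - x / r|) MeasureTheory.volume
      (c - η) (c + η) := by
    apply ContinuousOn.intervalIntegrable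
    rw [Set.uIcc_of_le (by linarith)]
    intro x hx
    have := h x hx.1 hx.2
    have h0 : |1 - x / r| ≠ 0 := (ha.trans_le this).ne'
    exact ContinuousAt.continuousWithinAt (by fun_prop (disch := assumption))
  have := intervalIntegral.integral_mono_on (μ := MeasureTheory.volume) (a := c - η) (b := c + η)
    (f := fun _ => Real.log a) (g := fun x => Real.log |1 - x / r|) (by linarith) (by simp) hint
    (fun x hx => Real.log_le_log ha (h x hx.1 hx.2))
  rw [intervalIntegral.integral_const, smul_eq_mul] at this
  linarith

/-! ### One level -/

/-- Sum over the nodes on one side of `r`, indexed by their rank `n` of distance from `r`: the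
nearest node contributes at least `-s`, the `n`-th one at least `log (θ n / z)`. Since
`z! ≥ (z / e) ^ z`, the logarithms together cost at most `z (1 + log (1/θ))`. -/
lemma half_sum (z M : ℕ) (hz : 1 ≤ z) (hM : M ≤ z) (θ s : ℝ) (hθ : 0 < θ) (hθ1 : θ ≤ 1)
    (hs : 0 ≤ s) (g : ℕ → ℝ) (h0 : -s ≤ g 0)
    (h : ∀ n : ℕ, 1 ≤ n → n < M → Real.log (θ * n / z) ≤ g n) :
    -(s + z - z * Real.log θ) ≤ ∑ n ∈ Finset.range M, g n := by
  have hz0 : (0 : ℝ) < z := by exact_mod_cast hz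
  have hlog : Real.log θ ≤ 0 := Real.log_nonpos hθ.le hθ1
  have hfull : -(z : ℝ) + z * Real.log θ ≤
      ∑ n ∈ Finset.range z, Real.log (θ * ((n + 1 : ℕ) : ℝ) / z) := by
    rw [← Real.log_prod (fun n _ => by positivity)]
    have e : ∏ n ∈ Finset.range z, (θ * ((n + 1 : ℕ) : ℝ) / z) = θ ^ z * (z.factorial / (z:ℝ) ^ z) := by
      rw [Finset.prod_div_distrib, Finset.prod_mul_distrib, ← Nat.cast_prod,
        Finset.prod_range_add_one_eq_factorial]
      simp [mul_div_assoc]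
    have hf : (0 : ℝ) < z.factorial := by exact_mod_cast z.factorial_pos
    rw [e, Real.log_mul (by positivity) (by positivity), Real.log_pow]
    have hx := Real.pow_div_factorial_le_exp (z : ℝ) hz0.le z
    have : -(z : ℝ) ≤ Real.log (z.factorial / (z:ℝ) ^ z) := by
      rw [Real.le_log_iff_exp_le (by positivity), Real.exp_neg, ← inv_div]
      exact inv_anti₀ (by positivity) hx
    linarith
  rcases M with _ | M
  · simp
    nlinarith
  · rw [Finset.sum_range_succ']
    have h1 : ∑ n ∈ Finset.range M, Real.log (θ * ((n + 1 : ℕ) : ℝ) / z) ≤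
        ∑ n ∈ Finset.range M, g (n + 1) := by
      apply Finset.sum_le_sum
      intro n hn
      have := Finset.mem_range.1 hn
      exact h (n + 1) (by omega) (by omega)
    have h2 : ∑ n ∈ Finset.range z, Real.log (θ * ((n + 1 : ℕ) : ℝ) / z) ≤
        ∑ n ∈ Finset.range M, Real.log (θ * ((n + 1 : ℕ) : ℝ) / z) := by
      rw [← neg_le_neg_iff, ← Finset.sum_neg_distrib, ← Finset.sum_neg_distrib]
      apply Finset.sum_le_sum_of_subset_of_nonneg
      · exact Finset.range_mono (by omega)
      · intro n hn _
        rw [neg_nonneg]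
        have h3 : ((n + 1 : ℕ) : ℝ) ≤ z := by
          exact_mod_cast (by have := Finset.mem_range.1 hn; omega : n + 1 ≤ z)
        apply Real.log_nonpos (by positivity)
        rw [div_le_one hz0]
        nlinarith
    linarith

/-- The integral of `log |1 - x / r|` over the interval of radius `η` around the node
`(1 + j / z) / 2 ^ i`. -/
noncomputable def levelIntegral (η r : ℝ) (z i j : ℕ) : ℝ :=
  ∫ x in ((1 + (j : ℝ) / (z : ℝ)) / 2 ^ i - η)..((1 + (j : ℝ) / (z : ℝ)) / 2 ^ i + η),
    Real.log |1 - x / r|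

/-- Bound for a level whose nodes may surround `r`; `ρ` bounds the ratio of `r` to the scale
`2 ^ (-i)` of the level. -/
lemma near_level (η r ρ : ℝ) (z i : ℕ) (hη : 0 < η) (hη80 : η ≤ 1 / 80) (hr : 0 < r)
    (hr1 : r ≤ 1 + η) (hz : 5 ≤ z) (hzlog : Real.log (1 / η) ≤ z)
    (hd : 4 * z * η * 2 ^ i ≤ 1) (hρ : r * 2 ^ i ≤ ρ) (hρ1 : 1 ≤ ρ) :
    2 * η * z * -(5.072 + 2 * Real.log ρ) ≤ ∑ j ∈ Finset.Icc 1 z, levelIntegral η r z i j := by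
  have hz5 : (5 : ℝ) ≤ z := by exact_mod_cast hz
  have hz0 : (0 : ℝ) < z := by linarith
  set D : ℝ := z * 2 ^ i with hD
  have hD0 : 0 < D := by positivity
  have hηD : η ≤ 1 / (4 * D) := by
    rw [le_div_iff₀ (by positivity)]; rw [hD]; linarith
  -- `t` is the fractional index of `r` among the nodes: `r = (1 + t / z) / 2 ^ i`.
  set t : ℝ := (r * 2 ^ i - 1) * z with ht
  set θ : ℝ := 3 / (4 * ρ) with hθ
  have hθ0 : 0 < θ := by positivity
  have hθ1 : θ ≤ 1 := by rw [hθ, div_le_one (by positivity)]; linarith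
  -- The excess `1 + log r ≤ 1 + 1 / 80` over `log (1 / η)` is absorbed by `0.2025 * z`, as `5 ≤ z`.
  have hsing : ∀ j, 2 * η * -(1.2025 * z) ≤ levelIntegral η r z i j := by
    intro j
    refine le_trans ?_ (integral_singular _ η r hη hr)
    gcongr
    rw [Real.log_div hη.ne' hr.ne']
    have h1 : Real.log r ≤ r - 1 := Real.log_le_sub_one_of_pos hr
    rw [one_div, Real.log_inv] at hzlog
    linarith
  have hreg : ∀ j n : ℕ, 1 ≤ n → (n : ℝ) ≤ |(j : ℝ) - t| →
      2 * η * Real.log (θ * n / z) ≤ levelIntegral η r z i j := by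
    intro j n hn hjt
    have hn1 : (1 : ℝ) ≤ n := by exact_mod_cast hn
    apply integral_regular _ η r _ hη (by positivity)
    intro x hx1 hx2
    set c := (1 + (j : ℝ) / (z : ℝ)) / 2 ^ i with hc
    have hcr : |c - r| = |(j : ℝ) - t| / D := by
      have e : c - r = ((j : ℝ) - t) / D := by rw [hc, ht, hD]; field_simp; ring
      rw [e, abs_div, abs_of_pos hD0]
    have h1 : n / D ≤ |c - r| := by rw [hcr]; gcongr
    have h2 : |c - r| ≤ |x - r| + η := by
      have := abs_sub_le c x r
      have : |c - x| ≤ η := abs_le.2 ⟨by linarith, by linarith⟩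
      linarith
    have h3 : 3 / 4 * (n / D) ≤ |x - r| := by
      have : 1 / (4 * D) ≤ 1 / 4 * (n / D) := by
        rw [show 1 / (4 * D) = 1 / 4 * (1 / D) by field_simp]; gcongr
      linarith
    have h4 : |1 - x / r| = |x - r| / r := by
      have e : 1 - x / r = -(x - r) / r := by field_simp; ring
      rw [e, abs_div, abs_neg, abs_of_pos hr]
    rw [h4, le_div_iff₀ hr]
    refine le_trans ?_ h3
    have : θ * n / z * r = 3 / 4 * (n / D) * (r * 2 ^ i / ρ) := by
      rw [hθ, hD]; field_simp
    rw [this]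
    apply mul_le_of_le_one_right (by positivity)
    rw [div_le_one (by positivity)]; exact hρ
  -- The nodes `1, …, J` are at most `r`, the nodes `J + 1, …, z` exceed it.
  set J := min ⌊t⌋₊ z with hJ
  have hJz : J ≤ z := min_le_right _ _
  have hup : ∀ j : ℕ, J < j → j ≤ z → t < J + 1 := by
    intro j h1 h2
    have : J = ⌊t⌋₊ := by omega
    rw [this]; exact Nat.lt_floor_add_one t
  have hdown : 1 ≤ J → (J : ℝ) ≤ t := by
    intro h1
    have h2 : J ≤ ⌊t⌋₊ := min_le_left _ _
    exact (Nat.le_floor_iff' (by omega)).1 h2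
  have hlogθ : -Real.log θ ≤ 1 / 3 + Real.log ρ := by
    rw [← Real.log_inv, hθ, inv_div, mul_div_right_comm,
      Real.log_mul (by norm_num) (by positivity)]
    have := Real.log_le_sub_one_of_pos (show (0 : ℝ) < 4 / 3 by norm_num)
    linarith
  have hA := half_sum z (z - J) (by omega) (by omega) θ (1.2025 * z) hθ0 hθ1 (by positivity)
    (fun n => levelIntegral η r z i (J + 1 + n) / (2 * η))
    (by rw [le_div_iff₀ (by positivity), mul_comm]; exact hsing _)
    (by
      intro n hn hnM
      rw [le_div_iff₀ (by positivity), mul_comm]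
      apply hreg _ _ hn
      have := hup (J + 1 + n) (by omega) (by omega)
      push_cast
      exact le_trans (by linarith) (le_abs_self _))
  have hB := half_sum z J (by omega) hJz θ (1.2025 * z) hθ0 hθ1 (by positivity)
    (fun n => levelIntegral η r z i (J - n) / (2 * η))
    (by rw [le_div_iff₀ (by positivity), mul_comm]; exact hsing _)
    (by
      intro n hn hnM
      rw [le_div_iff₀ (by positivity), mul_comm]
      apply hreg _ _ hn
      have := hdown (by omega)
      rw [Nat.cast_sub hnM.le]
      exact le_trans (by linarith) (neg_le_abs _))
  have hsum : ∑ j ∈ Finset.Icc 1 z, levelIntegral η r z i j =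
      ∑ n ∈ Finset.range J, levelIntegral η r z i (J - n) +
      ∑ n ∈ Finset.range (z - J), levelIntegral η r z i (J + 1 + n) := by
    rw [← Finset.Ico_add_one_right_eq_Icc,
      ← Finset.sum_Ico_consecutive _ (show 1 ≤ J + 1 by omega) (show J + 1 ≤ z + 1 by omega),
      Finset.sum_Ico_eq_sum_range, Finset.sum_Ico_eq_sum_range,
      show z + 1 - (J + 1) = z - J by omega, show J + 1 - 1 = J by omega,
      ← Finset.sum_range_reflect]
    congr 1
    refine Finset.sum_congr rfl fun n hn => ?_
    have := Finset.mem_range.1 hn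
    congr 1; omega
  rw [← Finset.sum_div, le_div_iff₀ (by positivity)] at hA hB
  rw [hsum]
  have : -(5.072 + 2 * Real.log ρ) * z ≤ 2 * -(1.2025 * z + z - z * Real.log θ) := by
    nlinarith
  nlinarith

/-- On a level far above `r` the ratio `x / r` is at least `2 ^ (k - 1 - i)`, so the logarithm is
positive and grows linearly in `k - i`. -/
lemma coarse_level (η r : ℝ) (z i k : ℕ) (hη : 0 < η) (hr : 0 < r) (hz : 5 ≤ z)
    (hd : 4 * z * η * 2 ^ i ≤ 1) (hk : r * 2 ^ k ≤ 2) (hik : i + 2 ≤ k) :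
    2 * η * z * (((k - 2 - i : ℕ) : ℝ) * Real.log 2) ≤
      ∑ j ∈ Finset.Icc 1 z, levelIntegral η r z i j := by
  have hz5 : (5 : ℝ) ≤ z := by exact_mod_cast hz
  have hz0 : (0 : ℝ) < z := by linarith
  obtain ⟨m, rfl⟩ : ∃ m, k = i + 2 + m := ⟨k - (i + 2), by omega⟩
  have h : ∀ j ∈ Finset.Icc 1 z, 2 * η * Real.log (2 ^ m) ≤ levelIntegral η r z i j := by
    intro j hj
    have hj1 : (1 : ℝ) ≤ j := by exact_mod_cast (Finset.mem_Icc.1 hj).1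
    apply integral_regular _ η r _ hη (by positivity)
    intro x hx1 _
    have h1 : η ≤ (j / z : ℝ) / 2 ^ i := by
      rw [le_div_iff₀ (by positivity), le_div_iff₀ hz0]
      nlinarith [show 0 < z * η * 2 ^ i by positivity]
    have h2 : 1 / 2 ^ i ≤ x := by rw [add_div] at hx1; linarith
    have h3 : 2 * 2 ^ m ≤ x / r := by
      rw [le_div_iff₀ hr]
      refine le_trans ?_ h2
      rw [le_div_iff₀ (by positivity)]
      rw [pow_add, pow_add] at hk
      linarith
    have h4 : (1 : ℝ) ≤ 2 ^ m := one_le_pow₀ (by norm_num)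
    rw [abs_sub_comm]
    exact le_trans (by linarith) (le_abs_self _)
  have := Finset.card_nsmul_le_sum _ _ _ h
  rw [Nat.card_Icc, nsmul_eq_mul, Real.log_pow] at this
  simp only [Nat.add_sub_cancel] at this
  rw [show i + 2 + m - 2 - i = m by omega]
  linarith

/-- On a level far below `r` one has `x / r ≤ 2.05 · 2 ^ (k - i)`, and the logarithm decays
geometrically. -/
lemma fine_level (η r : ℝ) (z i k : ℕ) (hη : 0 < η) (hr : 0 < r) (hz : 5 ≤ z)
    (hd : 4 * z * η * 2 ^ i ≤ 1) (hk : 1 ≤ r * 2 ^ k) (hik : k + 2 ≤ i) :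
    2 * η * z * -(4.21 * (2 ^ k / 2 ^ i)) ≤
      ∑ j ∈ Finset.Icc 1 z, levelIntegral η r z i j := by
  have hz5 : (5 : ℝ) ≤ z := by exact_mod_cast hz
  have hz0 : (0 : ℝ) < z := by linarith
  set v : ℝ := 2 ^ k / 2 ^ i with hv
  have hv0 : 0 < v := by positivity
  have hv4 : v ≤ 1 / 4 := by
    rw [hv, div_le_iff₀ (by positivity)]
    have : (2 : ℝ) ^ (k + 2) ≤ 2 ^ i := pow_le_pow_right₀ (by norm_num) hik
    rw [pow_add] at this
    linarith
  have h : ∀ j ∈ Finset.Icc 1 z, 2 * η * Real.log (1 - 2.05 * v) ≤ levelIntegral η r z i j := by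
    intro j hj
    have hjz : (j / z : ℝ) ≤ 1 := by
      rw [div_le_one hz0]; exact_mod_cast (Finset.mem_Icc.1 hj).2
    apply integral_regular _ η r _ hη (by linarith)
    intro x _ hx2
    have h1 : η ≤ 0.05 / 2 ^ i := by
      rw [le_div_iff₀ (by positivity)]
      nlinarith [show 0 < η * 2 ^ i by positivity]
    have h2 : x ≤ 2.05 / 2 ^ i := by
      have : (1 + (j / z : ℝ)) / 2 ^ i ≤ 2 / 2 ^ i := by gcongr; linarith
      have e : (2.05 : ℝ) / 2 ^ i = 2 / 2 ^ i + 0.05 / 2 ^ i := by ring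
      linarith
    have h3 : x / r ≤ 2.05 * v := by
      rw [div_le_iff₀ hr]
      refine h2.trans ?_
      rw [hv, div_le_iff₀ (by positivity)]
      field_simp
      linarith
    exact le_trans (by linarith) (le_abs_self _)
  have := Finset.card_nsmul_le_sum _ _ _ h
  rw [Nat.card_Icc, nsmul_eq_mul] at this
  simp only [Nat.add_sub_cancel] at this
  have hlog : -(4.21 * v) ≤ Real.log (1 - 2.05 * v) := by
    have h5 : 0 < 1 - 2.05 * v := by linarith
    refine le_trans ?_ (Real.one_sub_inv_le_log_of_pos h5)
    have : (1 - 2.05 * v)⁻¹ ≤ 1 + 4.21 * v := by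
      rw [inv_le_iff_one_le_mul₀ h5]; nlinarith
    linarith
  calc _ ≤ 2 * η * z * Real.log (1 - 2.05 * v) := by gcongr
    _ ≤ _ := by linarith

/-- The radius `η` is at most a quarter of the spacing `1 / (z 2 ^ i)` of the nodes on every level
`2 ^ i ≤ κ`. The tangent bound for `log` at `2` gives `z ≤ s + 0.4` with `s = η ^ (-1/2)`, while
`κ ≤ s / √20`. -/
lemma separation (κ η : ℝ) (z : ℕ) (hκ : 2 ≤ κ) (hη : 0 < η) (hη2 : η ≤ 1 / (20 * κ ^ 2))
    (hz : (z : ℝ) ≤ Real.log (1 / η) + 1) : 4 * z * η * κ ≤ 1 := by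
  set s := √(1 / η) with hs
  have hs0 : 0 < s := Real.sqrt_pos.2 (by positivity)
  have hs2 : s ^ 2 = 1 / η := Real.sq_sqrt (by positivity)
  have hηs : η = 1 / s ^ 2 := by rw [hs2]; simp
  have h20 : 20 * κ ^ 2 ≤ s ^ 2 := by
    rw [hs2, le_div_iff₀ hη]
    rwa [le_div_iff₀ (by positivity), mul_comm] at hη2
  have hsκ : 4.47 * κ ≤ s := by
    refine le_of_sq_le_sq ?_ hs0.le
    nlinarith
  have hlog : Real.log (1 / η) ≤ s - 0.6 := by
    rw [← hs2, Real.log_pow]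
    have h1 := Real.log_le_sub_one_of_pos (show 0 < s / 2 by positivity)
    rw [Real.log_div hs0.ne' (by norm_num)] at h1
    have := Real.log_two_lt_d9
    push_cast
    linarith
  have hzs : (z : ℝ) ≤ s + 0.4 := by linarith
  rw [hηs, mul_one_div, div_mul_eq_mul_div, div_le_one (by positivity)]
  nlinarith

/-! ### The weighted sum over the levels -/

lemma two_rpow_fifth_bounds : 1.148 ≤ (2 : ℝ) ^ (1 / 5 : ℝ) ∧ (2 : ℝ) ^ (1 / 5 : ℝ) ≤ 1.149 := by
  have h5 : ((2 : ℝ) ^ (1 / 5 : ℝ)) ^ 5 = 2 := by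
    rw [← Real.rpow_natCast, ← Real.rpow_mul (by norm_num)]; norm_num
  have h0 : (0 : ℝ) ≤ (2 : ℝ) ^ (1 / 5 : ℝ) := by positivity
  constructor
  · refine le_of_pow_le_pow_left₀ (n := 5) (by norm_num) h0 ?_
    rw [h5]; norm_num
  · refine le_of_pow_le_pow_left₀ (n := 5) (by norm_num) (by norm_num) ?_
    rw [h5]; norm_num

lemma weight_eq (i : ℕ) : (2 : ℝ) ^ ((i : ℝ) / 5) = ((2 : ℝ) ^ (1 / 5 : ℝ)) ^ i := by
  rw [← Real.rpow_natCast, ← Real.rpow_mul (by norm_num)]; congr 1; ring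

/-- Tangent line at `k = 20` of the convex function `k ↦ 2 ^ (k / 5)`. -/
lemma tangent (k : ℕ) :
    16 * (1 + (k : ℝ) * (Real.log 2 / 5) - 4 * Real.log 2) ≤ ((2 : ℝ) ^ (1 / 5 : ℝ)) ^ k := by
  rw [← weight_eq, Real.rpow_def_of_pos (by norm_num)]
  have h16 : Real.exp (4 * Real.log 2) = 16 := by
    rw [mul_comm, ← Real.rpow_def_of_pos (by norm_num)]; norm_num
  have e : Real.log 2 * ((k : ℝ) / 5) = (k * (Real.log 2 / 5) - 4 * Real.log 2) + 4 * Real.log 2 := by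
    ring
  rw [e, Real.exp_add, h16]
  have := Real.add_one_le_exp (k * (Real.log 2 / 5) - 4 * Real.log 2)
  linarith

lemma sum_pow_closed (w : ℝ) (n : ℕ) :
    (w - 1) * ∑ i ∈ Finset.Icc 1 n, w ^ i = w ^ (n + 1) - w := by
  induction n with
  | zero => simp
  | succ n ih => rw [Finset.sum_Icc_succ_top (by omega), mul_add, ih]; ring

lemma sum_mul_pow_closed (w : ℝ) (n : ℕ) :
    (w - 1) ^ 2 * ∑ i ∈ Finset.Icc 1 n, w ^ i * ((n - i : ℕ) : ℝ) =
      w ^ (n + 1) - w - n * w * (w - 1) := by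
  induction n with
  | zero => simp
  | succ n ih =>
    rw [Finset.sum_Icc_succ_top (by omega)]
    have : ∑ i ∈ Finset.Icc 1 n, w ^ i * ((n + 1 - i : ℕ) : ℝ) =
        ∑ i ∈ Finset.Icc 1 n, w ^ i * ((n - i : ℕ) : ℝ) + ∑ i ∈ Finset.Icc 1 n, w ^ i := by
      rw [← Finset.sum_add_distrib]
      refine Finset.sum_congr rfl fun i hi => ?_
      have := (Finset.mem_Icc.1 hi).2
      rw [Nat.succ_sub this]; push_cast; ring
    rw [this, mul_add, mul_add, ih, pow_two, mul_assoc (w - 1) (w - 1) (∑ i ∈ Finset.Icc 1 n, w ^ i),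
      sum_pow_closed]
    simp; ring

/-- Lower bound for the sum of the integrals on level `i`, in units of `2 η z`, when
`2 ^ (-k) ≤ r ≤ 2 ^ (1 - k)`. The three cases are the levels well above `r`, the levels
`k - 1, k, k + 1` near `r`, and the levels well below `r`. -/
noncomputable def levelBound (k i : ℕ) : ℝ :=
  if i + 2 ≤ k then ((k - 2 - i : ℕ) : ℝ) * Real.log 2
  else if i ≤ k + 1 then -(5.072 + 2 * ((i : ℝ) + 1 - k) * Real.log 2)
  else -(4.21 * (2 ^ k / 2 ^ i))

/-- With `w = 2 ^ (1/5)`, the negative terms cost at most `23.2 w ^ k`, whereas the positive ones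
give `27.1 w ^ k` minus a linear function of `k`; the tangent line of `w ^ k` at `k = 20` absorbs
the linear function. -/
lemma sum_levelBound (k L : ℕ) (hk : k ≤ L + 1) :
    -188.5 ≤ ∑ i ∈ Finset.Icc 1 L, (2 : ℝ) ^ ((i : ℝ) / 5) * levelBound k i := by
  simp only [weight_eq]
  obtain ⟨hw1, hw2⟩ := two_rpow_fifth_bounds
  have htan := tangent k
  set w : ℝ := (2 : ℝ) ^ (1 / 5 : ℝ) with hw
  have hw0 : 0 < w := by linarith
  have hl1 := Real.log_two_gt_d9
  have hl2 := Real.log_two_lt_d9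
  set l := Real.log 2
  have hpt : ∀ i ∈ Finset.Icc 1 L, l * (w ^ i * ((k - 2 - i : ℕ) : ℝ))
      - (if i + 1 = k then w ^ i * 5.072 else 0)
      - (if i = k then w ^ i * (5.072 + 2 * l) else 0)
      - (if i = k + 1 then w ^ i * (5.072 + 4 * l) else 0)
      - 4.21 * 2 ^ k * (if k + 2 ≤ i then (w / 2) ^ i else 0) ≤ w ^ i * levelBound k i := by
    intro i hi
    unfold levelBound
    rcases lt_or_ge (i + 1) k with h | h
    · simp only [show i + 2 ≤ k by omega, show i + 1 ≠ k by omega, show i ≠ k by omega,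
        show i ≠ k + 1 by omega, show ¬ (k + 2 ≤ i) by omega, if_true, if_false]
      apply le_of_eq; ring
    · have h0 : k - 2 - i = 0 := by omega
      rcases lt_or_ge (k + 1) i with h' | h'
      · simp only [show ¬ (i + 2 ≤ k) by omega, show i + 1 ≠ k by omega, show i ≠ k by omega,
          show i ≠ k + 1 by omega, show k + 2 ≤ i by omega, show ¬ i ≤ k + 1 by omega, if_true,
          if_false, h0, div_pow]
        apply le_of_eq; push_cast; ring
      · obtain rfl | rfl | rfl : k = i + 1 ∨ i = k ∨ i = k + 1 := by omega
        · simp only [h0, show ¬ (i + 2 ≤ i + 1) by omega, show i ≠ i + 1 by omega,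
            show i ≠ i + 1 + 1 by omega, show i ≤ i + 1 + 1 by omega,
            show ¬ (i + 1 + 2 ≤ i) by omega, if_true, if_false]
          apply le_of_eq; push_cast; ring
        · simp only [h0, show ¬ (i + 2 ≤ i) by omega, show i + 1 ≠ i by omega,
            show i ≠ i + 1 by omega, show i ≤ i + 1 by omega, if_true, if_false]
          apply le_of_eq; push_cast; ring
        · simp only [h0, show ¬ (k + 1 + 2 ≤ k) by omega, show k + 1 + 1 ≠ k by omega,
            show k + 1 ≠ k by omega, show k + 1 ≤ k + 1 by omega,
            show ¬ (k + 2 ≤ k + 1) by omega, if_true, if_false]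
          apply le_of_eq; push_cast; ring
  refine le_trans ?_ (Finset.sum_le_sum hpt)
  simp only [Finset.sum_sub_distrib, ← Finset.mul_sum]
  have hm0 : ∑ i ∈ Finset.Icc 1 L, (if i + 1 = k then w ^ i * 5.072 else 0) ≤ w ^ k * (5.072 / 1.148) := by
    rcases k with _ | k
    · simp; positivity
    · simp only [add_left_inj, Finset.sum_ite_eq']
      have : w ^ k * 5.072 ≤ w ^ (k + 1) * (5.072 / 1.148) := by
        rw [pow_succ, mul_assoc]; gcongr
        linarith
      split_ifs
      · exact this
      · positivity
  have hm1 : ∑ i ∈ Finset.Icc 1 L, (if i = k then w ^ i * (5.072 + 2 * l) else 0) ≤ w ^ k * 6.459 := by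
    rw [Finset.sum_ite_eq']
    split_ifs
    · gcongr; linarith
    · positivity
  have hm2 : ∑ i ∈ Finset.Icc 1 L, (if i = k + 1 then w ^ i * (5.072 + 4 * l) else 0) ≤
      w ^ k * (1.149 * 7.845) := by
    rw [Finset.sum_ite_eq']
    split_ifs
    · rw [pow_succ, mul_assoc]; gcongr; linarith
    · positivity
  have hlow : 2 ^ k * ∑ i ∈ Finset.Icc 1 L, (if k + 2 ≤ i then (w / 2) ^ i else 0) ≤ w ^ k * 0.777 := by
    have h1 : ∑ i ∈ Finset.Icc 1 L, (if k + 2 ≤ i then (w / 2) ^ i else 0) ≤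
        ∑ i ∈ Finset.Ico (k + 2) (L + 1), (w / 2) ^ i := by
      rw [← Finset.sum_filter]
      apply Finset.sum_le_sum_of_subset_of_nonneg
      · intro i hi
        simp only [Finset.mem_filter, Finset.mem_Icc, Finset.mem_Ico] at hi ⊢
        omega
      · intros; positivity
    have h2 := geom_sum_Ico_le_of_lt_one (x := w / 2) (m := k + 2) (n := L + 1) (by positivity)
      (by linarith)
    have h3 : 2 ^ k * ((w / 2) ^ (k + 2) / (1 - w / 2)) = w ^ k * ((w / 2) ^ 2 / (1 - w / 2)) := by
      rw [pow_add, div_pow w 2 k]; field_simp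
    have h4 : (w / 2) ^ 2 / (1 - w / 2) ≤ 0.777 := by
      rw [div_le_iff₀ (by linarith)]; nlinarith
    calc _ ≤ 2 ^ k * ((w / 2) ^ (k + 2) / (1 - w / 2)) := by gcongr; exact h1.trans h2
      _ ≤ _ := by rw [h3]; gcongr
  -- The positive contribution is `l * P`.
  set P := ∑ i ∈ Finset.Icc 1 L, w ^ i * ((k - 2 - i : ℕ) : ℝ) with hP
  have hP0 : 0 ≤ P := Finset.sum_nonneg fun i _ => by positivity
  suffices hmain : w ^ k * 23.2 - l * P ≤ 188.5 by
    have : 0 ≤ w ^ k := by positivity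
    norm_num at hm0 hm1 hm2 hlow hmain ⊢
    nlinarith
  rcases lt_or_ge k 2 with hk2 | hk2
  · have : w ^ k ≤ w := by
      interval_cases k
      · simp; linarith
      · simp
    nlinarith
  · obtain ⟨n, rfl⟩ : ∃ n, k = n + 2 := ⟨k - 2, by omega⟩
    have hPn : P = ∑ i ∈ Finset.Icc 1 n, w ^ i * ((n - i : ℕ) : ℝ) := by
      symm
      apply Finset.sum_subset
      · exact Finset.Icc_subset_Icc_right (by omega)
      · intro i _ hi
        have : n - i = 0 := by simp only [Finset.mem_Icc] at *; omega
        simp [this]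
    have hcl := sum_mul_pow_closed w n
    rw [← hPn] at hcl
    -- The closed form of `P`, with its coefficients replaced by their numerical bounds.
    have hn : (0 : ℝ) ≤ n := by positivity
    have hWpos : 0 ≤ w ^ (n + 2) := by positivity
    have hPlow : 39.2 * w ^ (n + 2) - 52.42 - 7.757 * n ≤ P := by
      have hs : 0 < (w - 1) ^ 2 := by nlinarith
      refine le_of_mul_le_mul_left ?_ hs
      rw [hcl]
      have a1 : (w - 1) ^ 2 * (39.2 * w ^ (n + 2)) ≤ w ^ (n + 1) := by
        have : w ^ (n + 2) = w ^ (n + 1) * w := pow_succ _ _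
        rw [this]
        have : (w - 1) ^ 2 * 39.2 * w ≤ 1 := by nlinarith
        have : 0 ≤ w ^ (n + 1) := by positivity
        nlinarith
      have a2 : w ≤ (w - 1) ^ 2 * 52.42 := by nlinarith
      have a3 : n * w * (w - 1) ≤ (w - 1) ^ 2 * (7.757 * n) := by
        have : w ≤ (w - 1) * 7.757 := by linarith
        have : (w - 1) * n * w ≤ (w - 1) * n * ((w - 1) * 7.757) := by
          apply mul_le_mul_of_nonneg_left this; apply mul_nonneg <;> linarith
        linarith
      linarith
    push_cast at htan
    have b1 : 0.6931 * (39.2 * w ^ (n + 2)) - 0.6932 * (52.42 + 7.757 * n) ≤ l * P := by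
      nlinarith
    have b2 : 16 * (1 + ((n : ℝ) + 2) * 0.1386 - 2.7728) ≤ w ^ (n + 2) := by
      nlinarith
    linarith

/-! ### Assembly -/

lemma level_ge (η r : ℝ) (z i k : ℕ) (hη : 0 < η) (hη80 : η ≤ 1 / 80) (hr : 0 < r)
    (hr1 : r ≤ 1 + η) (hz : 5 ≤ z) (hzlog : Real.log (1 / η) ≤ z)
    (hd : 4 * z * η * 2 ^ i ≤ 1) (hk1 : 1 ≤ r * 2 ^ k) (hk2 : r * 2 ^ k ≤ 2) :
    2 * η * z * levelBound k i ≤ ∑ j ∈ Finset.Icc 1 z, levelIntegral η r z i j := by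
  unfold levelBound
  split_ifs with h1 h2
  · exact coarse_level η r z i k hη hr hz hd hk2 h1
  · have h3 : k ≤ i + 1 := by omega
    have h := near_level η r (2 ^ (i + 1 - k)) z i hη hη80 hr hr1 hz hzlog hd
      (by
        have e : (2 : ℝ) ^ (i + 1 - k) * 2 ^ k = 2 ^ (i + 1) := by
          rw [← pow_add]; congr 1; omega
        have h2k : (0 : ℝ) < 2 ^ k := by positivity
        refine le_of_mul_le_mul_right ?_ h2k
        rw [e, pow_succ]
        nlinarith [show (0 : ℝ) < 2 ^ i by positivity])
      (one_le_pow₀ (by norm_num))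
    rw [Real.log_pow, Nat.cast_sub h3] at h
    push_cast at h
    rwa [← mul_assoc] at h
  · exact fine_level η r z i k hη hr hz hd hk1 (by omega)

/-- The key weighted-integral lower bound for the hard instance. With
`z = ⌈ln(1/η)⌉`, `L = ⌊log₂ κ⌋` and eigenvalues `λ_{i,j} = 2^{-i}(1 + j/z)`, for every root
`r ∈ [1/κ, 1 + η]`:
`∑_{i=1}^{L} 2^{i/5} ∑_{j=1}^{z} ∫_{λ_{i,j}-η}^{λ_{i,j}+η} ln|1 - x/r| dx ≥ -377 η z`. -/
theorem weighted_log_integral_lower_bound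
    (κ η : ℝ) (hκ : 2 ≤ κ) (hη : 0 < η) (hη2 : η ≤ 1 / (20 * κ ^ 2))
    (z L : ℕ) (hz : z = ⌈Real.log (1 / η)⌉₊) (hL : L = ⌊Real.logb 2 κ⌋₊)
    (r : ℝ) (hr : r ∈ Set.Icc (1 / κ) (1 + η)) :
    -377 * η * (z : ℝ) ≤
      ∑ i ∈ Finset.Icc 1 L, (2 : ℝ) ^ ((i : ℝ) / 5) *
        ∑ j ∈ Finset.Icc 1 z,
          ∫ x in ((1 + (j : ℝ) / (z : ℝ)) / 2 ^ i - η)..((1 + (j : ℝ) / (z : ℝ)) / 2 ^ i + η),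
            Real.log |1 - x / r| := by
  obtain ⟨hrl, hr1⟩ := hr
  have hκ0 : 0 < κ := by linarith
  have hr0 : 0 < r := lt_of_lt_of_le (by positivity) hrl
  have hη80 : η ≤ 1 / 80 := by
    refine hη2.trans ?_
    apply one_div_le_one_div_of_le (by norm_num)
    nlinarith
  have hlog4 : 4 < Real.log (1 / η) := by
    rw [Real.lt_log_iff_exp_lt (by positivity)]
    have h80 : 80 ≤ 1 / η := by rw [le_div_iff₀ hη]; linarith
    refine lt_of_lt_of_le ?_ h80
    have he : Real.exp 4 = Real.exp 1 ^ 4 := by rw [← Real.exp_nat_mul]; norm_num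
    rw [he]
    calc Real.exp 1 ^ 4 < 2.72 ^ 4 := by
          gcongr; exact Real.exp_one_lt_d9.trans (by norm_num)
      _ ≤ 80 := by norm_num
  have hzlog : Real.log (1 / η) ≤ z := hz ▸ Nat.le_ceil _
  have hz5 : 5 ≤ z := by
    have : (4 : ℝ) < z := by linarith
    exact_mod_cast this
  have hzup : (z : ℝ) ≤ Real.log (1 / η) + 1 := by
    rw [hz]; exact (Nat.ceil_lt_add_one (by linarith)).le
  have hsep := separation κ η z hκ hη hη2 hzup
  have hLκ : (2 : ℝ) ^ L ≤ κ := by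
    have : (L : ℝ) ≤ Real.logb 2 κ := by
      rw [hL]; exact Nat.floor_le (Real.logb_nonneg (by norm_num) (by linarith))
    rwa [Real.le_logb_iff_rpow_le (by norm_num) hκ0, Real.rpow_natCast] at this
  have hκL : κ < (2 : ℝ) ^ (L + 1) := by
    have : Real.logb 2 κ < ((L + 1 : ℕ) : ℝ) := by
      rw [hL]; push_cast; exact Nat.lt_floor_add_one _
    rwa [Real.logb_lt_iff_lt_rpow (by norm_num) hκ0, Real.rpow_natCast] at this
  -- The level `k` of `r`: `2 ^ (-k) < r ≤ 2 ^ (1 - k)`.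
  obtain ⟨k, hk1, hk2⟩ := exists_nat_pow_near (show 1 ≤ 2 / r by rw [le_div_iff₀ hr0]; linarith)
    (show (1 : ℝ) < 2 by norm_num)
  rw [le_div_iff₀ hr0, mul_comm] at hk1
  rw [div_lt_iff₀ hr0, pow_succ] at hk2
  have hkL : k ≤ L + 1 := by
    have h1 : 1 ≤ r * κ := by rwa [div_le_iff₀ hκ0] at hrl
    have h2 : r * 2 ^ k < r * 2 ^ (L + 2) := by
      rw [pow_succ 2 (L + 1)]; nlinarith
    have h3 := lt_of_mul_lt_mul_left h2 hr0.le
    have := (pow_lt_pow_iff_right₀ (by norm_num : (1 : ℝ) < 2)).1 h3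
    omega
  have hmain := sum_levelBound k L hkL
  have hzpos : (0 : ℝ) < z := by positivity
  calc -377 * η * (z : ℝ) = 2 * η * z * (-188.5) := by ring
    _ ≤ 2 * η * z * ∑ i ∈ Finset.Icc 1 L, (2 : ℝ) ^ ((i : ℝ) / 5) * levelBound k i := by gcongr
    _ ≤ _ := by
      rw [Finset.mul_sum]
      apply Finset.sum_le_sum
      intro i hi
      rw [mul_left_comm]
      gcongr
      apply level_ge η r z i k hη hη80 hr0 hr1 hz5 hzlog _ (by linarith) hk1
      refine le_trans ?_ hsep
      gcongr
      exact le_trans (pow_le_pow_right₀ (by norm_num) (Finset.mem_Icc.1 hi).2) hLκ
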